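/- Let α and a be positive natural numbers and let X = [1, ω^α·a] be the set of ordinals β with 1 ≤ β ≤ ω^α·a (ordinal exponentiation and multiplication), equipped with the order topology, and let G be the group of homeomorphisms of X onto itself. Then G has the small index property: every subgroup H of G whose index, as a cardinal, is strictly less than 2^ℵ₀ contains the pointwise stabilizer {g ∈ G : g(B) = B for all B ∈ A} of some finite set A of clopen subsets of X. -/

import Mathlib

open Ordinal Topology

noncomputable section

/-- The ordinal interval `[1, γ]`, i.e. the set of ordinals `β` with `1 ≤ β ≤ γ`, with the
subspace topology induced from the order topology on `Ordinal` (equivalently, its order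
topology, since it is order-connected). -/
abbrev OrdIcc (γ : Ordinal) : Type _ := ↥(Set.Icc (1 : Ordinal) γ)

/-- The group of self-homeomorphisms of a topological space, under composition. -/
instance homeoGroup {Y : Type*} [TopologicalSpace Y] : Group (Y ≃ₜ Y) where
  mul f g := g.trans f
  one := Homeomorph.refl Y
  inv := Homeomorph.symm
  mul_assoc f g h := rfl
  one_mul f := Homeomorph.ext fun _ => rfl
  mul_one f := Homeomorph.ext fun _ => rfl
  inv_mul_cancel f := Homeomorph.ext fun x => f.symm_apply_apply x

/-!
The space `[1, ω ^ (k + 1)]` is the one-point compactification of `ℕ × [1, ω ^ k]`, and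
`[1, ω ^ k * a]` is the union of `a` copies of `[1, ω ^ k]`. The point at infinity is the only
point of its Cantor–Bendixson rank, so every homeomorphism fixes it. By induction on `k` it is
therefore enough to transfer the small index property from a compact `Y` to `ι × Y`, with `ι`
discrete and countable, where finitely many slices are settled by the property of `Y` itself.

For infinite `ι`, a subgroup `H` of small index contains all homeomorphisms supported over some
cofinite subset of `ι`. By diagonalization `H` surjects onto some factor of any countable product of
homeomorphism groups, so it contains the commutators of a factor, and a swindle exhibits every
homeomorphism supported over a suitable infinite `S ⊆ ι` as such a commutator. A family of
permutations of `ι` indexed by the branches of the binary tree then provides a permutation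
`σ ∈ H` for which `S ∪ σ⁻¹ S` is cofinite, while `S \ σ⁻¹ S` and `S ∩ σ⁻¹ S` are infinite. These
sets leave enough room for `H` to contain every homeomorphism supported over `(S ∪ σ⁻¹ S) \ N`, for
all infinite coinfinite `N ⊆ S`, and each homeomorphism supported over `S ∪ σ⁻¹ S` agrees over some
such `N` with an element of `H`.
-/

/-- A subgroup is of small index if its index is less than the continuum. -/
def HasSmallIndex {G : Type*} [Group G] (H : Subgroup G) : Prop :=
  Cardinal.mk (G ⧸ H) < 2 ^ Cardinal.aleph0

theorem hasSmallIndex_iff {G : Type*} [Group G] {H : Subgroup G} :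
    HasSmallIndex H ↔ ∀ f : (ℕ → Bool) → G, ∃ x y, x ≠ y ∧ (f x)⁻¹ * f y ∈ H := by
  have continuum_le_iff : 2 ^ Cardinal.aleph0 ≤ Cardinal.mk (G ⧸ H) ↔
      Nonempty ((ℕ → Bool) ↪ G ⧸ H) := by
    rw [← Cardinal.lift_mk_le']
    simp
  rw [HasSmallIndex, ← not_le, continuum_le_iff, not_nonempty_iff]
  refine ⟨fun _ f => ?_, fun h => ⟨fun q => ?_⟩⟩
  · obtain ⟨x, y, hxy, hne⟩ := Function.not_injective_iff.mp
      fun hinj => IsEmpty.false (⟨fun x => (f x : G ⧸ H), hinj⟩ : (ℕ → Bool) ↪ G ⧸ H)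
    exact ⟨x, y, hne, QuotientGroup.eq.mp hxy⟩
  · obtain ⟨x, y, hne, hxy⟩ := h fun x => (q x).out
    refine hne (q.injective ?_)
    rw [← (q x).out_eq', ← (q y).out_eq']
    exact QuotientGroup.eq.mpr hxy

namespace HasSmallIndex

theorem comap {G G' : Type*} [Group G] [Group G'] {H : Subgroup G} (hH : HasSmallIndex H)
    (φ : G' →* G) : HasSmallIndex (H.comap φ) := by
  refine hasSmallIndex_iff.mpr fun f => ?_
  obtain ⟨x, y, hne, hxy⟩ := hasSmallIndex_iff.mp hH (φ ∘ f)
  exact ⟨x, y, hne, by simpa using hxy⟩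

theorem exists_map_evalMonoidHom_eq_top {K : ℕ → Type*} [∀ i, Group (K i)]
    {H : Subgroup (∀ i, K i)} (hH : HasSmallIndex H) :
    ∃ i, H.map (Pi.evalMonoidHom K i) = ⊤ := by
  by_contra! hne
  choose k hk using fun i => (not_forall.mp (mt (Subgroup.eq_top_iff' _).mpr (hne i)))
  obtain ⟨x, y, hxy, hmem⟩ := hasSmallIndex_iff.mp hH fun x i => if x i then k i else 1
  obtain ⟨i, hi⟩ := Function.ne_iff.mp hxy
  have himage := Subgroup.mem_map_of_mem (Pi.evalMonoidHom K i) hmem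
  apply hk i
  cases hx : x i <;> cases hy : y i <;> simp_all

end HasSmallIndex

section Pi

open scoped commutatorElement

variable {η : Type*} [DecidableEq η] {K : η → Type*} [∀ i, Group (K i)] {i : η}

theorem normal_comap_mulSingle {H : Subgroup (∀ i, K i)}
    (hH : H.map (Pi.evalMonoidHom K i) = ⊤) :
    (H.comap (MonoidHom.mulSingle K i)).Normal := by
  refine ⟨fun n hn g => ?_⟩
  obtain ⟨u, hu, rfl⟩ : g ∈ H.map (Pi.evalMonoidHom K i) := hH ▸ Subgroup.mem_top g
  have hconj : Pi.mulSingle i (u i * n * (u i)⁻¹) = u * Pi.mulSingle i n * u⁻¹ := by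
    ext j
    rcases eq_or_ne j i with rfl | hj <;> simp [*]
  rw [Subgroup.mem_comap, MonoidHom.mulSingle_apply] at hn ⊢
  rw [Pi.evalMonoidHom_apply, hconj]
  exact H.mul_mem (H.mul_mem hu hn) (H.inv_mem hu)

theorem commutator_le_comap_mulSingle {N : Subgroup (∀ i, K i)} [N.Normal]
    (hN : N.map (Pi.evalMonoidHom K i) = ⊤) :
    commutator (K i) ≤ N.comap (MonoidHom.mulSingle K i) := by
  refine Subgroup.commutator_le.mpr fun a _ b _ => ?_
  obtain ⟨u, hu, rfl⟩ : a ∈ N.map (Pi.evalMonoidHom K i) := hN ▸ Subgroup.mem_top a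
  have hcomm : Pi.mulSingle i ⁅u i, b⁆ = u * (Pi.mulSingle i b * u⁻¹ * (Pi.mulSingle i b)⁻¹) := by
    ext j
    rcases eq_or_ne j i with rfl | hj <;> simp [*, commutatorElement_def, mul_assoc]
  rw [Subgroup.mem_comap, MonoidHom.mulSingle_apply, Pi.evalMonoidHom_apply, hcomm]
  exact N.mul_mem hu (‹N.Normal›.conj_mem _ (N.inv_mem hu) _)

end Pi

section HomeoGroup

variable {X X' Z : Type*} [TopologicalSpace X] [TopologicalSpace X'] [TopologicalSpace Z]

/-- The isomorphism between the homeomorphism groups of homeomorphic spaces given by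
conjugation. -/
def homeoGroupCongr (e : X ≃ₜ X') : (X ≃ₜ X) ≃* (X' ≃ₜ X') where
  toFun g := (e.symm.trans g).trans e
  invFun g := (e.trans g).trans e.symm
  left_inv g := by ext; simp
  right_inv g := by ext; simp
  map_mul' f g := by ext; simp

@[simp]
theorem homeoGroupCongr_apply (e : X ≃ₜ X') (g : X ≃ₜ X) (x : X') :
    homeoGroupCongr e g x = e (g (e.symm x)) := rfl

/-- The group of homeomorphisms that fix every point outside `U`. -/
def supportedIn (U : Set X) : Subgroup (X ≃ₜ X) where
  carrier := {g | ∀ x ∉ U, g x = x}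
  mul_mem' {f g} hf hg x hx := by rw [Homeomorph.mul_apply, hg x hx, hf x hx]
  one_mem' _ _ := rfl
  inv_mem' {g} hg x hx := by rw [Homeomorph.inv_apply, g.symm_apply_eq, hg x hx]

theorem supportedIn_mono {U V : Set X} (h : U ⊆ V) : supportedIn U ≤ supportedIn V :=
  fun _ hg x hx => hg x fun hU => hx (h hU)

theorem apply_mem_iff_of_mem_supportedIn {U : Set X} {g : X ≃ₜ X} (hg : g ∈ supportedIn U)
    {x : X} : g x ∈ U ↔ x ∈ U := by
  refine not_iff_not.mp ⟨fun h => ?_, fun h => by rwa [hg x h]⟩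
  rwa [← g.injective (hg _ h)]

theorem supportedIn_preimage_le {H : Subgroup (X ≃ₜ X)} {U : Set X} {k : X ≃ₜ X} (hk : k ∈ H)
    (hU : supportedIn U ≤ H) : supportedIn (k ⁻¹' U) ≤ H := fun g hg => by
  have hconj : k * g * k⁻¹ ∈ supportedIn U := fun x hx => by
    simp [hg (k.symm x) (by simpa using hx)]
  simpa [mul_assoc] using H.mul_mem (H.mul_mem (H.inv_mem hk) (hU hconj)) hk

theorem exists_homeomorph_comp_eq {j : Z → X} (hj : IsEmbedding j) (g : X ≃ₜ X)
    (hg : ∀ x, x ∈ Set.range j ↔ g x ∈ Set.range j) :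
    ∃ f : Z ≃ₜ Z, ∀ z, j (f z) = g (j z) := by
  refine ⟨hj.toHomeomorph.trans ((g.subtype hg).trans hj.toHomeomorph.symm), fun z => ?_⟩
  exact congrArg Subtype.val (hj.toHomeomorph.apply_symm_apply (g.subtype hg (hj.toHomeomorph z)))

theorem exists_mem_supportedIn_eqOn {U : Set X} (hU : IsClopen U) (θ : X ≃ₜ X)
    (hdisj : Disjoint U (θ '' U)) : ∃ ρ ∈ supportedIn (U ∪ θ '' U), Set.EqOn ρ θ U := by
  classical
  let swap : X → X := U.piecewise θ ((θ '' U).piecewise θ.symm id)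
  have swap_of_mem : ∀ x ∈ U, swap x = θ x := fun x hx => Set.piecewise_eq_of_mem _ _ _ hx
  have swap_image : ∀ x ∈ U, swap (θ x) = x := fun x hx => by
    have hx' : θ x ∈ θ '' U := Set.mem_image_of_mem θ hx
    simp [swap, hx', hdisj.notMem_of_mem_right hx']
  have swap_of_notMem : ∀ x ∉ U ∪ θ '' U, swap x = x := fun x hx => by
    rw [Set.mem_union, not_or] at hx
    simp only [swap, Set.piecewise_eq_of_notMem _ _ _ hx.1, Set.piecewise_eq_of_notMem _ _ _ hx.2,
      id]
  have swap_swap : Function.Involutive swap := fun x => by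
    by_cases hx : x ∈ U ∪ θ '' U
    · rcases hx with hx | ⟨x, hx, rfl⟩
      · rw [swap_of_mem x hx, swap_image x hx]
      · rw [swap_image x hx, swap_of_mem x hx]
    · rw [swap_of_notMem x hx, swap_of_notMem x hx]
  have hU' : IsClopen (θ '' U) := ⟨θ.isClosed_image.mpr hU.1, θ.isOpen_image.mpr hU.2⟩
  have swap_continuous : Continuous swap :=
    θ.continuous.piecewise (by simp [hU.frontier_eq])
      (θ.symm.continuous.piecewise (by simp [hU'.frontier_eq]) continuous_id)
  exact ⟨⟨swap_swap.toPerm, swap_continuous, swap_continuous⟩, swap_of_notMem, swap_of_mem⟩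

end HomeoGroup

section Prod

variable {ι Z : Type*} [TopologicalSpace ι] [DiscreteTopology ι] [TopologicalSpace Z]

/-- The homomorphism letting a family of homeomorphisms of `Z` act slicewise on `ι × Z`. -/
def sliceHom : (ι → (Z ≃ₜ Z)) →* (ι × Z ≃ₜ ι × Z) where
  toFun u :=
    { toEquiv := Equiv.prodCongrRight fun i => (u i).toEquiv
      continuous_toFun := continuous_prod_of_discrete_left.mpr fun i =>
        continuous_const.prodMk (u i).continuous
      continuous_invFun := continuous_prod_of_discrete_left.mpr fun i =>
        continuous_const.prodMk (u i).symm.continuous }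
  map_one' := rfl
  map_mul' _ _ := rfl

@[simp]
theorem sliceHom_apply (u : ι → (Z ≃ₜ Z)) (p : ι × Z) : sliceHom u p = (p.1, u p.1 p.2) := rfl

@[simp]
theorem sliceHom_symm_apply (u : ι → (Z ≃ₜ Z)) (p : ι × Z) :
    (sliceHom u).symm p = (p.1, (u p.1).symm p.2) := rfl

/-- The homomorphism letting permutations of `ι` permute the slices of `ι × Z`. -/
def permHom : Equiv.Perm ι →* (ι × Z ≃ₜ ι × Z) where
  toFun σ := σ.toHomeomorphOfDiscrete.prodCongr (Homeomorph.refl Z)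
  map_one' := rfl
  map_mul' _ _ := rfl

@[simp]
theorem permHom_apply (σ : Equiv.Perm ι) (p : ι × Z) : permHom σ p = (σ p.1, p.2) := rfl

@[simp]
theorem permHom_symm_apply (σ : Equiv.Perm ι) (p : ι × Z) :
    (permHom σ).symm p = (σ.symm p.1, p.2) := rfl

theorem exists_sliceHom_mulSingle_eq [DecidableEq ι] {i : ι} {V : Set Z} {g : ι × Z ≃ₜ ι × Z}
    (hg : g ∈ supportedIn ({i} ×ˢ V)) : ∃ f ∈ supportedIn V, sliceHom (Pi.mulSingle i f) = g := by
  have range_eq : Set.range (fun z : Z => (i, z)) = {i} ×ˢ Set.univ := by ext ⟨j, z⟩; simp [eq_comm]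
  obtain ⟨f, hf⟩ := exists_homeomorph_comp_eq (isEmbedding_prodMkRight i) g fun x => by
    rw [range_eq, apply_mem_iff_of_mem_supportedIn
      (supportedIn_mono (Set.prod_mono_right (Set.subset_univ V)) hg)]
  refine ⟨f, fun z hz => ?_, Homeomorph.ext fun ⟨j, z⟩ => ?_⟩
  · exact congrArg Prod.snd ((hf z).trans (hg (i, z) (by simp [hz])))
  · rcases eq_or_ne j i with rfl | hj
    · simp [← hf]
    · simp [hj, hg (j, z) (by simp [hj])]

/-- The shift `τ` of `ℤ × Z` and the copy `k` of `f⁻¹` on all slices `m ≥ 0` have commutator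
`τ k τ⁻¹ k⁻¹` equal to `f` on the slice `0`. -/
theorem sliceHom_mulSingle_zero_mem_commutator (f : Z ≃ₜ Z) :
    sliceHom (Pi.mulSingle 0 f) ∈ commutator (ℤ × Z ≃ₜ ℤ × Z) := by
  let k : ℤ → (Z ≃ₜ Z) := fun m => if 0 ≤ m then f.symm else 1
  have hcomm : sliceHom (Pi.mulSingle 0 f) = permHom (Equiv.addRight 1) * sliceHom k *
      (permHom (Equiv.addRight 1))⁻¹ * (sliceHom k)⁻¹ := by
    ext1 ⟨m, z⟩
    rcases lt_trichotomy m 0 with hm | rfl | hm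
    · have h₁ : ¬1 ≤ m := by lia
      simp [k, hm.ne, hm.not_ge, h₁]
    · simp [k]
    · have h₁ : 1 ≤ m := by lia
      simp [k, hm.ne', hm.le, h₁]
  rw [hcomm]
  exact Subgroup.commutator_mem_commutator (Subgroup.mem_top _) (Subgroup.mem_top _)

/-- The group of homeomorphisms of `ι × Z` that fix every slice `{i} × Z` with `i ∉ S` pointwise. -/
abbrev supportedOver (S : Set ι) : Subgroup (ι × Z ≃ₜ ι × Z) := supportedIn (Prod.fst ⁻¹' S)

theorem HasSmallIndex.exists_sliceHom_mulSingle_mem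
    {H : Subgroup (ℕ × (ℕ × Z) ≃ₜ ℕ × (ℕ × Z))} (hH : HasSmallIndex H) :
    ∃ i j, ∀ f ∈ commutator (Z ≃ₜ Z),
      sliceHom (Pi.mulSingle i (sliceHom (Pi.mulSingle j f))) ∈ H := by
  obtain ⟨i, hi⟩ := (hH.comap sliceHom).exists_map_evalMonoidHom_eq_top
  let N : Subgroup (ℕ × Z ≃ₜ ℕ × Z) :=
    (H.comap sliceHom).comap (MonoidHom.mulSingle (fun _ => ℕ × Z ≃ₜ ℕ × Z) i)
  have N_normal : N.Normal := normal_comap_mulSingle hi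
  have N_small : HasSmallIndex N := (hH.comap sliceHom).comap _
  obtain ⟨j, hj⟩ := (N_small.comap sliceHom).exists_map_evalMonoidHom_eq_top
  exact ⟨i, j, fun f hf => commutator_le_comap_mulSingle hj hf⟩

theorem HasSmallIndex.exists_supportedOver_le [Countable ι] [Infinite ι]
    {H : Subgroup (ι × Z ≃ₜ ι × Z)} (hH : HasSmallIndex H) :
    ∃ S : Set ι, S.Infinite ∧ Sᶜ.Infinite ∧ supportedOver S ≤ H := by
  obtain ⟨e⟩ : Nonempty (ι ≃ ℕ × ℕ × ℤ × ℕ) := nonempty_equiv_of_countable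
  let E : ι × Z ≃ₜ ℕ × ℕ × ℤ × ℕ × Z :=
    (e.toHomeomorphOfDiscrete.prodCongr (Homeomorph.refl Z)).trans
      ((Homeomorph.prodAssoc _ _ _).trans ((Homeomorph.refl ℕ).prodCongr
        ((Homeomorph.prodAssoc _ _ _).trans ((Homeomorph.refl ℕ).prodCongr
          (Homeomorph.prodAssoc _ _ _)))))
  obtain ⟨i, j, hij⟩ :=
    (hH.comap (homeoGroupCongr E).symm.toMonoidHom).exists_sliceHom_mulSingle_mem
  let row (m : ℤ) (n : ℕ) : ι := e.symm (i, j, m, n)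
  have row_injective (m : ℤ) : Function.Injective (row m) := fun n n' h => by simpa [row] using h
  refine ⟨Set.range (row 0), Set.infinite_range_of_injective (row_injective 0),
    (Set.infinite_range_of_injective (row_injective 1)).mono ?_, fun g hg => ?_⟩
  · rintro _ ⟨n, rfl⟩ ⟨n', h⟩
    simp [row] at h
  have g_mem : homeoGroupCongr E g ∈ supportedIn ({i} ×ˢ {j} ×ˢ {0} ×ˢ Set.univ) := by
    rintro ⟨i', j', m, n, z⟩ h
    rw [homeoGroupCongr_apply, hg _ ?_, E.apply_symm_apply]
    rintro ⟨n', hn'⟩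
    have h' : (i, j, 0, n') = (i', j', m, n) := e.symm.injective hn'
    simp_all
  obtain ⟨g₁, hg₁, hgg₁⟩ := exists_sliceHom_mulSingle_eq g_mem
  obtain ⟨g₂, hg₂, rfl⟩ := exists_sliceHom_mulSingle_eq hg₁
  obtain ⟨f, -, rfl⟩ := exists_sliceHom_mulSingle_eq hg₂
  have hmem := hij _ (sliceHom_mulSingle_zero_mem_commutator f)
  rwa [hgg₁, Subgroup.mem_comap, MulEquiv.toMonoidHom_eq_coe, MonoidHom.coe_coe,
    MulEquiv.symm_apply_apply] at hmem

end Prod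

section Perm

variable {ι : Type*}

/-- Swap, in every row of `ℕ × Option (List Bool)`, the point `none` with the initial segment of
`x` of length the row number; for `x ≠ y` two such involutions differ in almost every row. -/
def prefixSwap (x : ℕ → Bool) : Equiv.Perm (ℕ × Option (List Bool)) :=
  Equiv.prodCongrRight fun n => Equiv.swap none (some (PiNat.res x n))

@[simp]
theorem prefixSwap_apply (x : ℕ → Bool) (n : ℕ) (s : Option (List Bool)) :
    prefixSwap x (n, s) = (n, Equiv.swap none (some (PiNat.res x n)) s) := rfl

theorem prefixSwap_inv (x : ℕ → Bool) : (prefixSwap x)⁻¹ = prefixSwap x := rfl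

theorem HasSmallIndex.exists_perm_almost_cover_nat_prod
    {K : Subgroup (Equiv.Perm (ℕ × Option (List Bool)))} (hK : HasSmallIndex K) :
    ∃ σ ∈ K, ({p | p.2 ≠ none} ∪ σ ⁻¹' {p | p.2 ≠ none})ᶜ.Finite ∧
      ({p | p.2 ≠ none} \ σ ⁻¹' {p | p.2 ≠ none}).Infinite ∧
      ({p | p.2 ≠ none} ∩ σ ⁻¹' {p | p.2 ≠ none}).Infinite := by
  obtain ⟨x, y, hxy, hmem⟩ := hasSmallIndex_iff.mp hK prefixSwap
  rw [prefixSwap_inv] at hmem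
  obtain ⟨m, hm⟩ := Function.ne_iff.mp hxy
  have res_ne {n : ℕ} (hn : m < n) : PiNat.res x n ≠ PiNat.res y n :=
    fun h => hm (PiNat.res_eq_res.mp h hn)
  refine ⟨_, hmem, ?_, ?_, ?_⟩
  · refine ((Set.finite_le_nat m).image fun n => (n, none)).subset ?_
    rintro ⟨n, s⟩ hs
    simp only [Set.mem_compl_iff, Set.mem_union, Set.mem_ofPred_eq, Set.mem_preimage, not_or,
      not_not] at hs
    obtain ⟨rfl, hσ⟩ := hs
    refine ⟨n, (not_lt.mp fun hn => ?_ : n ≤ m), rfl⟩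
    simp [Equiv.swap_apply_of_ne_of_ne, (res_ne hn).symm] at hσ
  · refine Set.infinite_of_injective_forall_mem
      (f := fun n => (m + 1 + n, some (PiNat.res x (m + 1 + n))))
      (fun i j h => by simpa using congrArg Prod.fst h) fun n => ?_
    have := res_ne (n := m + 1 + n) (by lia)
    simp [Equiv.swap_apply_of_ne_of_ne, this]
  · refine Set.infinite_of_injective_forall_mem (f := fun n => (n + 1, some []))
      (fun i j h => by simpa using congrArg Prod.fst h) fun n => ?_
    simp [Equiv.swap_apply_of_ne_of_ne]

theorem exists_infinite_of_finite_sections {r : ι → ι → Prop}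
    (hr : ∀ i, {j | r i j}.Finite) (hr' : ∀ j, {i | r i j}.Finite) {S : Set ι} (hS : S.Infinite) :
    ∃ N : Fin 3 → Set ι, (∀ t, N t ⊆ S ∧ (N t).Infinite) ∧
      ∀ s t, s ≠ t → Disjoint (N s) (N t) ∧ ∀ i ∈ N s, ∀ j ∈ N t, ¬r i j := by
  have symm_r : Std.Symm fun i j => i ≠ j ∧ ¬r i j ∧ ¬r j i := ⟨fun i j h => ⟨h.1.symm, h.2.symm⟩⟩
  obtain ⟨f, hfS, hf⟩ := exists_seq_of_forall_finset_exists' (· ∈ S)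
    (fun i j => i ≠ j ∧ ¬r i j ∧ ¬r j i) fun F _ => by
      have hbad : (⋃ i ∈ F, ({i} ∪ {j | r i j} ∪ {j | r j i})).Finite := F.finite_toSet.biUnion
        fun i _ => ((Set.finite_singleton i).union (hr i)).union (hr' i)
      obtain ⟨j, hjS, hj⟩ := (hS.sdiff hbad).nonempty
      simp only [Set.mem_iUnion, Set.mem_union, Set.mem_singleton_iff, Set.mem_ofPred_eq,
        not_exists, not_or] at hj
      exact ⟨j, hjS, fun i hi => ⟨Ne.symm (hj i hi).1.1, (hj i hi).1.2, (hj i hi).2⟩⟩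
  have f_injective : Function.Injective f := fun m n h => by_contra fun hne => (hf hne).1 h
  let u (t : Fin 3) (n : ℕ) : ℕ := Nat.pair t n
  have u_ne {s t : Fin 3} (hst : s ≠ t) (m n : ℕ) : u s m ≠ u t n := by
    simp [u, Fin.val_inj, hst]
  refine ⟨fun t => Set.range (f ∘ u t), fun t => ⟨Set.range_subset_iff.mpr fun n => hfS _,
    Set.infinite_range_of_injective (f_injective.comp fun m n h => by simpa [u] using h)⟩,
    fun s t hst => ⟨?_, ?_⟩⟩
  · rw [Set.disjoint_range_iff]
    exact fun m n => (hf (u_ne hst m n)).1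
  · rintro _ ⟨m, rfl⟩ _ ⟨n, rfl⟩
    exact (hf (u_ne hst m n)).2.1

theorem exists_equiv_image_eq {κ : Type*} [Countable ι] [Countable κ] {A : Set ι}
    {B : Set κ} (hA : A.Infinite) (hA' : Aᶜ.Infinite) (hB : B.Infinite) (hB' : Bᶜ.Infinite) :
    ∃ e : ι ≃ κ, e '' A = B := by
  classical
  have := hA.to_subtype; have := hA'.to_subtype
  have := hB.to_subtype; have := hB'.to_subtype
  obtain ⟨e₁⟩ : Nonempty (A ≃ B) := nonempty_equiv_of_countable
  obtain ⟨e₂⟩ : Nonempty (↥Aᶜ ≃ ↥Bᶜ) := nonempty_equiv_of_countable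
  let e : ι ≃ κ :=
    (Equiv.Set.sumCompl A).symm.trans ((e₁.sumCongr e₂).trans (Equiv.Set.sumCompl B))
  have e_of_mem (a : A) : e a = e₁ a := by simp [e]
  refine ⟨e, Set.Subset.antisymm ?_ fun b hb => ?_⟩
  · rintro _ ⟨a, ha, rfl⟩
    exact e_of_mem ⟨a, ha⟩ ▸ (e₁ ⟨a, ha⟩).2
  · exact ⟨e₁.symm ⟨b, hb⟩, Subtype.coe_prop _, by simp [e_of_mem]⟩

theorem exists_perm_image_eq [Countable ι] {A B C : Set ι} (hAC : A ⊆ C) (hBC : B ⊆ C)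
    (hA : A.Infinite) (hB : B.Infinite) (hCA : (C \ A).Infinite) (hCB : (C \ B).Infinite) :
    ∃ p : Equiv.Perm ι, (∀ i ∉ C, p i = i) ∧ p '' A = B := by
  classical
  have infinite_preimage {D : Set ι} (hDC : D ⊆ C) (hD : D.Infinite) :
      ((↑) ⁻¹' D : Set C).Infinite := hD.preimage (by simpa using hDC)
  obtain ⟨e, he⟩ := exists_equiv_image_eq (infinite_preimage hAC hA)
    (infinite_preimage Set.sdiff_subset hCA |>.mono fun x hx => hx.2) (infinite_preimage hBC hB)
    (infinite_preimage Set.sdiff_subset hCB |>.mono fun x hx => hx.2)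
  refine ⟨Equiv.Perm.ofSubtype e, fun i hi => Equiv.Perm.ofSubtype_apply_of_not_mem e hi, ?_⟩
  have semiconj : Equiv.Perm.ofSubtype e ∘ ((↑) : C → ι) = (↑) ∘ e :=
    funext fun c => Equiv.Perm.ofSubtype_apply_coe e c
  calc Equiv.Perm.ofSubtype e '' A
      = Equiv.Perm.ofSubtype e '' ((↑) '' ((↑) ⁻¹' A : Set C)) := by
        rw [Subtype.image_preimage_coe, Set.inter_eq_right.mpr hAC]
    _ = (↑) '' (e '' ((↑) ⁻¹' A)) := by rw [← Set.image_comp, semiconj, Set.image_comp]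
    _ = B := by rw [he, Subtype.image_preimage_coe, Set.inter_eq_right.mpr hBC]

theorem HasSmallIndex.exists_perm_almost_cover [Countable ι] {K : Subgroup (Equiv.Perm ι)}
    (hK : HasSmallIndex K) {S : Set ι} (hS : S.Infinite) (hS' : Sᶜ.Infinite) :
    ∃ σ ∈ K, (S ∪ σ ⁻¹' S)ᶜ.Finite ∧ (S \ σ ⁻¹' S).Infinite ∧ (S ∩ σ ⁻¹' S).Infinite := by
  let S₀ : Set (ℕ × Option (List Bool)) := {p | p.2 ≠ none}
  have S₀_infinite : S₀.Infinite :=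
    Set.infinite_of_injective_forall_mem (f := fun n : ℕ => (n, some []))
      (fun m n h => congrArg Prod.fst h) (by simp [S₀])
  have S₀_compl_infinite : S₀ᶜ.Infinite :=
    Set.infinite_of_injective_forall_mem (f := fun n : ℕ => (n, none))
      (fun m n h => congrArg Prod.fst h) (by simp [S₀])
  obtain ⟨e, he⟩ := exists_equiv_image_eq S₀_infinite S₀_compl_infinite hS hS'
  obtain ⟨σ, hσ, hfin, hdiff, hinter⟩ :=
    (hK.comap e.permCongrHom.toMonoidHom).exists_perm_almost_cover_nat_prod
  have preimage_eq : e.permCongr σ ⁻¹' S = e '' (σ ⁻¹' S₀) := by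
    ext i; simp [← he, Equiv.permCongr_apply]
  refine ⟨e.permCongr σ, hσ, ?_⟩
  rw [preimage_eq, ← he, ← Set.image_union, ← Set.image_sdiff e.injective,
    ← Set.image_inter e.injective, ← Set.image_compl_eq e.bijective]
  exact ⟨hfin.image e, hdiff.image e.injective.injOn, hinter.image e.injective.injOn⟩

end Perm

section Core

variable {ι Y : Type*} [TopologicalSpace ι] [DiscreteTopology ι] [TopologicalSpace Y]

theorem supportedOver_preimage_le {H : Subgroup (ι × Y ≃ₜ ι × Y)} {σ : Equiv.Perm ι} {S : Set ι}
    (hσ : permHom σ ∈ H) (hS : supportedOver S ≤ H) : supportedOver (σ ⁻¹' S) ≤ H :=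
  supportedIn_preimage_le hσ hS

theorem permHom_mem_supportedOver {σ : Equiv.Perm ι} {S : Set ι} (hσ : ∀ i ∉ S, σ i = i) :
    permHom σ ∈ supportedOver (Z := Y) S :=
  fun p hp => Prod.ext (hσ p.1 hp) rfl

theorem supportedOver_union_sdiff_le [Countable ι] {H : Subgroup (ι × Y ≃ₜ ι × Y)} {S T N : Set ι}
    (hS : supportedOver S ≤ H) (hT : supportedOver T ≤ H) (hST : (S \ T).Infinite)
    (hST' : (S ∩ T).Infinite) (hNS : N ⊆ S) (hN : N.Infinite) (hSN : (S \ N).Infinite) :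
    supportedOver ((S ∪ T) \ N) ≤ H := by
  obtain ⟨p, hp, hpN⟩ := exists_perm_image_eq hNS Set.sdiff_subset hN hST hSN
    (hST'.mono fun i hi => ⟨hi.1, fun h => h.2 hi.2⟩)
  refine (supportedIn_mono (Set.preimage_mono ?_)).trans
    (supportedOver_preimage_le (hS (permHom_mem_supportedOver hp)) hT)
  rintro i ⟨hi, hiN⟩
  by_cases hiS : i ∈ S
  · have hpi : p i ∉ S \ T := by rwa [← hpN, p.injective.mem_set_image]
    have hpiS : p i ∈ S := by
      by_contra h
      exact h (by rwa [p.injective (hp _ h)])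
    exact by_contra fun h => hpi ⟨hpiS, h⟩
  · rw [Set.mem_preimage, hp i hiS]
    exact hi.resolve_left hiS

theorem exists_mem_supportedIn_apply_permHom {g : ι × Y ≃ₜ ι × Y} {σ : Equiv.Perm ι} {N N' : Set ι}
    (hσ : σ '' N = N') (hg : ∀ p, p.1 ∈ N → (g p).1 ∉ N') :
    ∃ ρ ∈ supportedIn (Prod.fst ⁻¹' N' ∪ g '' (Prod.fst ⁻¹' N)),
      ∀ p, p.1 ∈ N → ρ (permHom σ p) = g p := by
  let θ : ι × Y ≃ₜ ι × Y := g * (permHom σ)⁻¹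
  have image_permHom : permHom σ '' (Prod.fst ⁻¹' N) = (Prod.fst ⁻¹' N' : Set (ι × Y)) := by
    rw [← hσ, (permHom σ).image_eq_preimage_symm, σ.image_eq_preimage_symm]
    rfl
  have image_θ : θ '' (Prod.fst ⁻¹' N') = g '' (Prod.fst ⁻¹' N) := by
    rw [← image_permHom, Set.image_image]
    simp [θ]
  have hdisj : Disjoint (Prod.fst ⁻¹' N') (θ '' (Prod.fst ⁻¹' N')) := by
    rw [image_θ, Set.disjoint_left]
    rintro _ hp ⟨p, hpN, rfl⟩
    exact hg p hpN hp
  obtain ⟨ρ, hρ, hρθ⟩ := exists_mem_supportedIn_eqOn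
    ((isClopen_discrete N').preimage continuous_fst) θ hdisj
  refine ⟨ρ, image_θ ▸ hρ, fun p hp => ?_⟩
  rw [hρθ (image_permHom ▸ Set.mem_image_of_mem _ hp)]
  simp [θ]

theorem exists_infinite_apply_fst_notMem [CompactSpace Y] (g : ι × Y ≃ₜ ι × Y) {S : Set ι}
    (hS : S.Infinite) : ∃ N : Fin 3 → Set ι, (∀ t, N t ⊆ S ∧ (N t).Infinite) ∧
      ∀ s t, s ≠ t → Disjoint (N s) (N t) ∧ ∀ p, p.1 ∈ N s → (g p).1 ∉ N t := by
  have finite_section (g : ι × Y ≃ₜ ι × Y) (i : ι) : {j | ∃ y, (g (i, y)).1 = j}.Finite :=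
    (isCompact_range (f := fun y => (g (i, y)).1) (by fun_prop)).finite_of_discrete
  obtain ⟨N, hN, hNN⟩ := exists_infinite_of_finite_sections
    (r := fun i j => ∃ y, (g (i, y)).1 = j) (finite_section g)
    (fun j => (finite_section g.symm j).subset <| by
      rintro i ⟨y, rfl⟩
      exact ⟨(g (i, y)).2, by simp⟩) hS
  exact ⟨N, hN, fun s t hst =>
    ⟨(hNN s t hst).1, fun p hp h => (hNN s t hst).2 _ hp _ h ⟨p.2, rfl⟩⟩⟩

/-- An element `ρ * permHom σ` of `H` agrees with `g` over an infinite `N 0 ⊆ S`, so that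
`(ρ * permHom σ)⁻¹ * g` fixes the slices over `N 0` and lies in `H` as well. -/
theorem supportedOver_union_le [Countable ι] [CompactSpace Y] {H : Subgroup (ι × Y ≃ₜ ι × Y)}
    {S T : Set ι} (hS : supportedOver S ≤ H) (hT : supportedOver T ≤ H) (hST : (S \ T).Infinite)
    (hST' : (S ∩ T).Infinite) : supportedOver (S ∪ T) ≤ H := by
  intro g hg
  obtain ⟨N, hN, hNN⟩ := exists_infinite_apply_fst_notMem g (hST.mono Set.sdiff_subset)
  have sdiff_infinite {s t : Fin 3} (hst : s ≠ t) : (S \ N s).Infinite :=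
    (hN t).2.mono (Set.subset_sdiff.mpr ⟨(hN t).1, (hNN t s hst.symm).1⟩)
  have sdiff_le {s t : Fin 3} (hst : s ≠ t) : supportedOver ((S ∪ T) \ N s) ≤ H :=
    supportedOver_union_sdiff_le hS hT hST hST' (hN s).1 (hN s).2 (sdiff_infinite hst)
  obtain ⟨σ, hσ, hσN⟩ := exists_perm_image_eq (hN 0).1 (hN 2).1 (hN 0).2 (hN 2).2
    (sdiff_infinite (by decide : (0 : Fin 3) ≠ 1)) (sdiff_infinite (by decide : (2 : Fin 3) ≠ 1))
  obtain ⟨ρ, hρ, hρσ⟩ := exists_mem_supportedIn_apply_permHom hσN (hNN 0 2 (by decide)).2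
  have hρ_supp : ρ ∈ supportedOver ((S ∪ T) \ N 1) := by
    refine supportedIn_mono (Set.union_subset (fun p hp => ?_) ?_) hρ
    · exact ⟨Or.inl ((hN 2).1 hp), (hNN 2 1 (by decide)).1.notMem_of_mem_left hp⟩
    · rintro _ ⟨p, hp, rfl⟩
      exact ⟨(apply_mem_iff_of_mem_supportedIn hg).mpr (Or.inl ((hN 0).1 hp)),
        (hNN 0 1 (by decide)).2 p hp⟩
  have hσ_supp : permHom σ ∈ supportedOver (Z := Y) S := permHom_mem_supportedOver hσ
  have hk_supp : ρ * permHom σ ∈ supportedOver (S ∪ T) :=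
    mul_mem (supportedIn_mono (Set.preimage_mono Set.sdiff_subset) hρ_supp)
      (supportedIn_mono (Set.preimage_mono Set.subset_union_left) hσ_supp)
  have hk : ρ * permHom σ ∈ H := mul_mem (sdiff_le (by decide : (1 : Fin 3) ≠ 0) hρ_supp)
    (hS hσ_supp)
  have hquot : (ρ * permHom σ)⁻¹ * g ∈ supportedOver ((S ∪ T) \ N 0) := by
    intro p hp
    by_cases hpN : p.1 ∈ N 0
    · rw [Homeomorph.mul_apply, ← hρσ p hpN, Homeomorph.inv_apply]
      exact (ρ * permHom σ).symm_apply_apply p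
    · exact mul_mem (inv_mem hk_supp) hg p fun h => hp ⟨h, hpN⟩
  exact (H.mul_mem_cancel_left (inv_mem hk)).mp (sdiff_le (by decide : (0 : Fin 3) ≠ 1) hquot)

theorem HasSmallIndex.exists_finset_supportedOver_compl_le [Countable ι] [Infinite ι]
    [CompactSpace Y] {H : Subgroup (ι × Y ≃ₜ ι × Y)} (hH : HasSmallIndex H) :
    ∃ E : Finset ι, supportedOver (↑E : Set ι)ᶜ ≤ H := by
  obtain ⟨S, hS, hS', hSH⟩ := hH.exists_supportedOver_le
  obtain ⟨σ, hσ, hfin, hdiff, hinter⟩ := (hH.comap permHom).exists_perm_almost_cover hS hS'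
  refine ⟨hfin.toFinset, ?_⟩
  rw [hfin.coe_toFinset, compl_compl]
  exact supportedOver_union_le hSH (supportedOver_preimage_le hσ hSH) hdiff hinter

end Core

/-- The small index property of the homeomorphism group of `X`: a subgroup of index less than the
continuum contains the stabilizer of finitely many clopen sets. -/
def SmallIndexProperty (X : Type*) [TopologicalSpace X] : Prop :=
  ∀ H : Subgroup (X ≃ₜ X), HasSmallIndex H → ∃ A : Finset (Set X), (∀ B ∈ A, IsClopen B) ∧
    ∀ g : X ≃ₜ X, (∀ B ∈ A, ⇑g '' B = B) → g ∈ H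

namespace SmallIndexProperty

theorem of_subsingleton {X : Type*} [TopologicalSpace X] [Subsingleton X] :
    SmallIndexProperty X := by
  refine fun H _ => ⟨∅, by simp, fun g _ => ?_⟩
  rw [show g = 1 from Homeomorph.ext fun _ => Subsingleton.elim _ _]
  exact H.one_mem

section Transfer

variable {X X' Z : Type*} [TopologicalSpace X] [TopologicalSpace X'] [TopologicalSpace Z]

open scoped Classical in
theorem mem_of_forall_image_eq {j : Z → X} (hj : Function.Injective j)
    {φ : (Z ≃ₜ Z) →* (X ≃ₜ X)} (hφj : ∀ f z, φ f (j z) = j (f z)) (hφ : Function.Surjective φ)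
    {H : Subgroup (X ≃ₜ X)} {A : Finset (Set Z)}
    (hA : ∀ f : Z ≃ₜ Z, (∀ B ∈ A, ⇑f '' B = B) → f ∈ H.comap φ) {g : X ≃ₜ X}
    (hg : ∀ B ∈ A.image (j '' ·), ⇑g '' B = B) : g ∈ H := by
  obtain ⟨f, rfl⟩ := hφ g
  refine hA f fun B hB => hj.image_injective ?_
  calc j '' (f '' B) = φ f '' (j '' B) := by simp only [Set.image_image, hφj]
    _ = j '' B := hg _ (Finset.mem_image_of_mem _ hB)

theorem congr (hX : SmallIndexProperty X) (e : X ≃ₜ X') : SmallIndexProperty X' := by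
  classical
  intro H hH
  obtain ⟨A, hA, hAH⟩ := hX _ (hH.comap (homeoGroupCongr e).toMonoidHom)
  refine ⟨A.image (e '' ·), Finset.forall_mem_image.mpr fun B hB =>
    ⟨e.isClosed_image.mpr (hA B hB).1, e.isOpen_image.mpr (hA B hB).2⟩, fun g hg => ?_⟩
  exact mem_of_forall_image_eq e.injective (fun f x => by simp) (homeoGroupCongr e).surjective
    hAH hg

end Transfer

section Prod

variable {ι Y : Type*} [TopologicalSpace ι] [TopologicalSpace Y]

theorem exists_homeomorph_of_image_slice_eq {i : ι} {g : ι × Y ≃ₜ ι × Y} {A : Finset (Set Y)}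
    (hg : g '' ({i} ×ˢ Set.univ) = {i} ×ˢ Set.univ) (hA : ∀ B ∈ A, g '' ({i} ×ˢ B) = {i} ×ˢ B) :
    ∃ f : Y ≃ₜ Y, (∀ y, (i, f y) = g (i, y)) ∧ ∀ B ∈ A, f '' B = B := by
  have image_mk (B : Set Y) : Prod.mk i '' B = {i} ×ˢ B := Set.singleton_prod.symm
  obtain ⟨f, hf⟩ := exists_homeomorph_comp_eq (isEmbedding_prodMkRight i) g fun x => by
    rw [← Set.image_univ, image_mk, ← g.injective.mem_set_image, hg]
  refine ⟨f, hf, fun B hB => (Prod.mk_right_injective i).image_injective ?_⟩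
  calc Prod.mk i '' (f '' B) = g '' (Prod.mk i '' B) := by simp only [Set.image_image, hf]
    _ = Prod.mk i '' B := by rw [image_mk, hA B hB]

theorem exists_finset_isCompact [DiscreteTopology ι] [CompactSpace Y] (hY : SmallIndexProperty Y)
    {H : Subgroup (ι × Y ≃ₜ ι × Y)} (hH : HasSmallIndex H) {E : Finset ι}
    (hE : supportedOver (↑E : Set ι)ᶜ ≤ H) :
    ∃ A : Finset (Set (ι × Y)), (∀ B ∈ A, IsClopen B ∧ IsCompact B) ∧
      ∀ g : ι × Y ≃ₜ ι × Y, (∀ B ∈ A, ⇑g '' B = B) → g ∈ H := by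
  classical
  choose A hA hAH using fun i =>
    hY _ ((hH.comap sliceHom).comap (MonoidHom.mulSingle (fun _ => Y ≃ₜ Y) i))
  refine ⟨E.biUnion fun i => (insert Set.univ (A i)).image ({i} ×ˢ ·), fun B hB => ?_,
    fun g hg => ?_⟩
  · simp only [Finset.mem_biUnion, Finset.mem_image] at hB
    obtain ⟨i, -, B, hB, rfl⟩ := hB
    have hB' : IsClopen B := by
      rcases Finset.mem_insert.mp hB with rfl | hB
      exacts [isClopen_univ, hA i B hB]
    exact ⟨(isClopen_discrete {i}).prod hB', isCompact_singleton.prod hB'.1.isCompact⟩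
  · have hg' (i : ι) (hi : i ∈ E) (B : Set Y) (hB : B ∈ insert Set.univ (A i)) :
        g '' ({i} ×ˢ B) = {i} ×ˢ B :=
      hg _ (Finset.mem_biUnion.mpr ⟨i, hi, Finset.mem_image_of_mem _ hB⟩)
    have exists_slice (i : ι) (hi : i ∈ E) : ∃ f : Y ≃ₜ Y,
        (∀ y, (i, f y) = g (i, y)) ∧ sliceHom (Pi.mulSingle i f) ∈ H := by
      obtain ⟨f, hf, hfA⟩ := exists_homeomorph_of_image_slice_eq
        (hg' i hi _ (Finset.mem_insert_self _ _))
        fun B hB => hg' i hi B (Finset.mem_insert_of_mem hB)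
      exact ⟨f, hf, hAH i f hfA⟩
    choose! f hf using exists_slice
    let u (i : ι) : Y ≃ₜ Y := if i ∈ E then f i else 1
    have hu : sliceHom u ∈ H := Submonoid.pi_mem_of_mulSingle_mem_aux (H := H.comap sliceHom) E u
      (fun i hi => if_neg hi) fun i hi => by simpa [u, hi] using (hf i hi).2
    refine (H.mul_mem_cancel_left (inv_mem hu)).mp (hE fun ⟨i, y⟩ hi => ?_)
    have hiE : i ∈ E := by simpa using hi
    rw [Homeomorph.mul_apply, ← (hf i hiE).1, Homeomorph.inv_apply, Homeomorph.symm_apply_eq]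
    simp [u, hiE]

theorem prod_of_finite [DiscreteTopology ι] [Finite ι] [CompactSpace Y]
    (hY : SmallIndexProperty Y) : SmallIndexProperty (ι × Y) := by
  intro H hH
  have := Fintype.ofFinite ι
  obtain ⟨A, hA, hAH⟩ := hY.exists_finset_isCompact hH (E := Finset.univ) fun g hg => by
    have : g = 1 := Homeomorph.ext fun p => hg p (by simp)
    exact this ▸ H.one_mem
  exact ⟨A, fun B hB => (hA B hB).1, hAH⟩

end Prod

end SmallIndexProperty

section OnePoint

variable {Z : Type*} [TopologicalSpace Z]

/-- The homomorphism extending homeomorphisms of `Z` to its one-point compactification. -/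
def onePointHom : (Z ≃ₜ Z) →* (OnePoint Z ≃ₜ OnePoint Z) where
  toFun f := f.onePointCongr
  map_one' := by ext x; cases x <;> rfl
  map_mul' f g := by ext x; cases x <;> rfl

theorem onePointHom_surjective
    (h : ∀ g : OnePoint Z ≃ₜ OnePoint Z, g OnePoint.infty = OnePoint.infty) :
    Function.Surjective (onePointHom (Z := Z)) := by
  intro g
  obtain ⟨f, hf⟩ := exists_homeomorph_comp_eq OnePoint.isOpenEmbedding_coe.isEmbedding g fun x => by
    rw [← not_iff_not, OnePoint.notMem_range_coe_iff, OnePoint.notMem_range_coe_iff,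
      g.injective.eq_iff' (h g)]
  refine ⟨f, Homeomorph.ext fun x => ?_⟩
  induction x using OnePoint.rec with
  | infty => exact (h g).symm
  | coe z => exact hf z

end OnePoint

theorem SmallIndexProperty.onePoint_prod {ι Y : Type*} [TopologicalSpace ι] [DiscreteTopology ι]
    [Countable ι] [Infinite ι] [TopologicalSpace Y] [CompactSpace Y] (hY : SmallIndexProperty Y)
    (hfix : ∀ g : OnePoint (ι × Y) ≃ₜ OnePoint (ι × Y), g OnePoint.infty = OnePoint.infty) :
    SmallIndexProperty (OnePoint (ι × Y)) := by
  classical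
  intro H hH
  have hK := hH.comap (onePointHom (Z := ι × Y))
  obtain ⟨E, hE⟩ := hK.exists_finset_supportedOver_compl_le
  obtain ⟨A, hA, hAK⟩ := hY.exists_finset_isCompact hK hE
  refine ⟨A.image ((↑) '' ·), Finset.forall_mem_image.mpr fun B hB => ?_, fun g hg => ?_⟩
  · exact ⟨OnePoint.isClosed_image_coe.mpr ⟨(hA B hB).1.1, (hA B hB).2⟩,
      OnePoint.isOpen_image_coe.mpr (hA B hB).1.2⟩
  · exact mem_of_forall_image_eq OnePoint.coe_injective (fun _ _ => rfl)
      (onePointHom_surjective hfix) hAK hg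

section DerivedSet

variable {X X' : Type*} [TopologicalSpace X] [TopologicalSpace X']

theorem preimage_derivedSet {j : X → X'} (hj : IsOpenEmbedding j) (A : Set X') :
    j ⁻¹' derivedSet A = derivedSet (j ⁻¹' A) := by
  ext x
  rw [Set.mem_preimage, mem_derivedSet, mem_derivedSet, ← Filter.comap_principal,
    hj.accPt_comap_iff]

theorem preimage_derivedSet_iterate_univ {j : X → X'} (hj : IsOpenEmbedding j) (k : ℕ) :
    j ⁻¹' derivedSet^[k] Set.univ = derivedSet^[k] Set.univ := by
  induction k with
  | zero => rfl
  | succ k ih =>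
    rw [Function.iterate_succ_apply', Function.iterate_succ_apply', preimage_derivedSet hj, ih]

theorem apply_eq_of_derivedSet_iterate_univ_eq_singleton {k : ℕ} {p : X}
    (hp : derivedSet^[k] (Set.univ : Set X) = {p}) (g : X ≃ₜ X) : g p = p := by
  have h := preimage_derivedSet_iterate_univ g.isOpenEmbedding k
  rw [hp] at h
  exact h.ge rfl

theorem derivedSet_iterate_univ_eq_singleton_apply {k : ℕ} {p : X}
    (hp : derivedSet^[k] (Set.univ : Set X) = {p}) (e : X ≃ₜ X') :
    derivedSet^[k] (Set.univ : Set X') = {e p} := by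
  rw [← preimage_derivedSet_iterate_univ e.symm.isOpenEmbedding k, hp, ← e.image_eq_preimage_symm,
    Set.image_singleton]

theorem derivedSet_iterate_univ_onePoint_prod {ι Y : Type*} [TopologicalSpace ι]
    [DiscreteTopology ι] [Infinite ι] [TopologicalSpace Y] [T1Space Y] {k : ℕ} {p : Y}
    (hp : derivedSet^[k] (Set.univ : Set Y) = {p}) :
    derivedSet^[k + 1] (Set.univ : Set (OnePoint (ι × Y))) = {OnePoint.infty} := by
  have isOpenEmbedding_slice (i : ι) :
      IsOpenEmbedding fun y : Y => (((i, y) : ι × Y) : OnePoint (ι × Y)) :=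
    OnePoint.isOpenEmbedding_coe.comp ⟨isEmbedding_prodMkRight i, by
      rw [← Set.image_univ, ← Set.singleton_prod]
      exact (isOpen_discrete {i}).prod isOpen_univ⟩
  have eq_infty {x} (hx : x ∈ derivedSet^[k + 1] (Set.univ : Set (OnePoint (ι × Y)))) :
      x = OnePoint.infty := by
    induction x using OnePoint.rec with
    | infty => rfl
    | coe z =>
      have hz : z.2 ∈ derivedSet^[k + 1] (Set.univ : Set Y) := by
        rwa [← preimage_derivedSet_iterate_univ (isOpenEmbedding_slice z.1)]
      rw [Function.iterate_succ_apply', hp] at hz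
      exact absurd (Set.finite_singleton p) (Set.Infinite.of_accPt hz)
  have coe_mem (i : ι) : (((i, p) : ι × Y) : OnePoint (ι × Y)) ∈ derivedSet^[k] Set.univ := by
    have hp' : p ∈ derivedSet^[k] (Set.univ : Set Y) := hp ▸ rfl
    rwa [← preimage_derivedSet_iterate_univ (isOpenEmbedding_slice i)] at hp'
  obtain ⟨x, hx⟩ := (Set.infinite_of_injective_forall_mem
    (fun i j h => by simpa using h) coe_mem).exists_accPt_principal
  rw [← mem_derivedSet, ← Function.iterate_succ_apply' derivedSet] at hx
  exact Set.Subset.antisymm (fun _ => eq_infty) (Set.singleton_subset_iff.mpr (eq_infty hx ▸ hx))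

end DerivedSet

section Ordinal

universe u

/-- The copy `w * n + β` in the `n`-th block of length `w` of a point `β` of `[1, w]`. -/
def ordBlock {w : Ordinal.{u}} (p : ℕ × OrdIcc w) : Ordinal.{u} := w * p.1 + p.2.1

variable {w : Ordinal.{u}}

theorem one_le_ordBlock (p : ℕ × OrdIcc w) : 1 ≤ ordBlock p := p.2.2.1.trans le_add_self

theorem mul_lt_ordBlock (p : ℕ × OrdIcc w) : w * p.1 < ordBlock p :=
  lt_add_of_pos_right _ (zero_lt_one.trans_le p.2.2.1)

theorem ordBlock_le_mul {p : ℕ × OrdIcc w} {n : ℕ} (h : p.1 < n) : ordBlock p ≤ w * n := by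
  have hn : ((p.1 + 1 : ℕ) : Ordinal.{u}) ≤ n := by exact_mod_cast h
  calc w * p.1 + p.2.1 ≤ w * p.1 + w := by gcongr; exact p.2.2.2
    _ = w * ((p.1 + 1 : ℕ) : Ordinal) := by push_cast; rw [mul_add_one]
    _ ≤ w * n := by gcongr

theorem ordBlock_injective : Function.Injective (ordBlock (w := w)) := by
  have ordBlock_lt {p q : ℕ × OrdIcc w} (h : p.1 < q.1) : ordBlock p < ordBlock q :=
    (ordBlock_le_mul h).trans_lt (mul_lt_ordBlock q)
  rintro ⟨n, β⟩ ⟨m, γ⟩ h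
  obtain hnm | rfl | hmn := lt_trichotomy n m
  · exact absurd h (ordBlock_lt hnm).ne
  · exact congrArg (n, ·) (Subtype.ext (add_left_cancel h))
  · exact absurd h (ordBlock_lt hmn).ne'

theorem exists_ordBlock_eq {x : Ordinal.{u}} (hx : 1 ≤ x) {N : ℕ} (hxN : x ≤ w * N) :
    ∃ p : ℕ × OrdIcc w, p.1 < N ∧ ordBlock p = x := by
  induction N with
  | zero => exact absurd (hx.trans hxN) (by simp)
  | succ N ih =>
    rcases le_or_gt x (w * N) with h | h
    · obtain ⟨p, hp, rfl⟩ := ih h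
      exact ⟨p, hp.trans N.lt_succ_self, rfl⟩
    · refine ⟨(N, ⟨x - w * N, ?_, ?_⟩), N.lt_succ_self, Ordinal.add_sub_cancel_of_le h.le⟩
      · rwa [Order.one_le_iff_pos, Ordinal.lt_sub, add_zero]
      · rwa [Ordinal.sub_le, ← mul_add_one, ← Nat.cast_add_one]

theorem continuous_ordBlock : Continuous (ordBlock (w := w)) :=
  continuous_prod_of_discrete_left.mpr fun n =>
    (Ordinal.isNormal_add_right (w * n)).continuous.comp continuous_subtype_val

theorem nonempty_fin_prod_ordIcc_homeomorph (w : Ordinal.{u}) (a : ℕ) :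
    Nonempty (Fin a × OrdIcc w ≃ₜ OrdIcc (w * a)) := by
  let f (p : Fin a × OrdIcc w) : OrdIcc (w * a) :=
    ⟨ordBlock (p.1.val, p.2), one_le_ordBlock _, ordBlock_le_mul p.1.2⟩
  have f_bijective : Function.Bijective f := by
    refine ⟨fun p q h => ?_, fun x => ?_⟩
    · obtain ⟨hn, hβ⟩ := Prod.mk.inj (ordBlock_injective (congrArg Subtype.val h))
      exact Prod.ext (Fin.ext hn) hβ
    · obtain ⟨p, hp, hpx⟩ := exists_ordBlock_eq x.2.1 x.2.2
      exact ⟨(⟨p.1, hp⟩, p.2), Subtype.ext hpx⟩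
  have f_continuous : Continuous f := Continuous.subtype_mk
    (continuous_ordBlock.comp (continuous_of_discreteTopology.prodMap continuous_id)) _
  exact ⟨f_continuous.homeoOfEquivCompactToT2 (f := Equiv.ofBijective f f_bijective)⟩

theorem exists_lt_mul_natCast {x : Ordinal.{u}} (h : x < w * ω) : ∃ n : ℕ, x < w * n := by
  obtain ⟨c, hc, hx⟩ := (Ordinal.lt_mul_iff_of_isSuccLimit Ordinal.isSuccLimit_omega0).mp h
  obtain ⟨n, rfl⟩ := Ordinal.lt_omega0.mp hc
  exact ⟨n, hx⟩

theorem ordBlock_lt_mul_omega0 (p : ℕ × OrdIcc w) : ordBlock p < w * ω := by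
  have hw : 0 < w := zero_lt_one.trans_le (p.2.2.1.trans p.2.2.2)
  exact (ordBlock_le_mul p.1.lt_succ_self).trans_lt
    ((mul_lt_mul_iff_right₀ hw).mpr (Ordinal.natCast_lt_omega0 _))

theorem tendsto_ordBlock (w : Ordinal.{u}) :
    Filter.Tendsto ordBlock (Filter.coclosedCompact (ℕ × OrdIcc w)) (𝓝 (w * ω)) := by
  refine tendsto_order.mpr ⟨fun l hl => ?_, fun l hl =>
    .of_forall fun p => (ordBlock_lt_mul_omega0 p).trans hl⟩
  obtain ⟨n, hn⟩ := exists_lt_mul_natCast hl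
  have compact : IsCompact (Set.Iio n ×ˢ (Set.univ : Set (OrdIcc w))) :=
    (Set.finite_Iio n).isCompact.prod isCompact_univ
  filter_upwards [compact.compl_mem_coclosedCompact_of_isClosed compact.isClosed] with p hp
  have hnp : n ≤ p.1 := not_lt.mp fun h => hp ⟨h, Set.mem_univ _⟩
  calc l < w * n := hn
    _ ≤ w * p.1 := by gcongr
    _ < ordBlock p := mul_lt_ordBlock p

/-- The extension of `ordBlock` to the one-point compactification, with value `w * ω` at
infinity. -/
def onePointOrdBlock {w : Ordinal.{u}} (x : OnePoint (ℕ × OrdIcc w)) : Ordinal.{u} :=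
  x.elim (w * ω) ordBlock

theorem onePointOrdBlock_injective : Function.Injective (onePointOrdBlock (w := w)) := by
  intro x y h
  induction x using OnePoint.rec <;> induction y using OnePoint.rec
  case infty.infty => rfl
  case infty.coe q => exact absurd h (ordBlock_lt_mul_omega0 q).ne'
  case coe.infty p => exact absurd h (ordBlock_lt_mul_omega0 p).ne
  case coe.coe p q => exact congrArg _ (ordBlock_injective h)

theorem continuous_onePointOrdBlock : Continuous (onePointOrdBlock (w := w)) := by
  rw [continuous_iff_continuousAt, OnePoint.forall]
  exact ⟨OnePoint.continuousAt_infty'.mpr (tendsto_ordBlock w), fun p =>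
    OnePoint.continuousAt_coe.mpr continuous_ordBlock.continuousAt⟩

theorem nonempty_onePoint_prod_ordIcc_homeomorph (hw : 0 < w) :
    Nonempty (OnePoint (ℕ × OrdIcc w) ≃ₜ OrdIcc (w * ω)) := by
  have mem_Icc (x : OnePoint (ℕ × OrdIcc w)) : onePointOrdBlock x ∈ Set.Icc 1 (w * ω) := by
    induction x using OnePoint.rec with
    | infty => exact ⟨Order.one_le_iff_pos.mpr (mul_pos hw Ordinal.omega0_pos), le_rfl⟩
    | coe p => exact ⟨one_le_ordBlock p, (ordBlock_lt_mul_omega0 p).le⟩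
  let f (x : OnePoint (ℕ × OrdIcc w)) : OrdIcc (w * ω) := ⟨onePointOrdBlock x, mem_Icc x⟩
  have f_bijective : Function.Bijective f := by
    refine ⟨fun x y h => onePointOrdBlock_injective (congrArg Subtype.val h), ?_⟩
    rintro ⟨x, hx1, hxw⟩
    rcases hxw.eq_or_lt with rfl | hlt
    · exact ⟨OnePoint.infty, rfl⟩
    · obtain ⟨N, hN⟩ := exists_lt_mul_natCast hlt
      obtain ⟨p, -, hp⟩ := exists_ordBlock_eq hx1 hN.le
      exact ⟨p, Subtype.ext hp⟩
  have f_continuous : Continuous f := continuous_onePointOrdBlock.subtype_mk _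
  exact ⟨f_continuous.homeoOfEquivCompactToT2 (f := Equiv.ofBijective f f_bijective)⟩

instance : Unique (OrdIcc (ω ^ ((0 : ℕ) : Ordinal.{u}))) where
  default := ⟨1, by simp⟩
  uniq β := Subtype.ext (le_antisymm (by simpa using β.2.2) β.2.1)

theorem nonempty_onePoint_prod_ordIcc_omega0_pow_homeomorph (k : ℕ) :
    Nonempty (OnePoint (ℕ × OrdIcc (ω ^ (k : Ordinal.{u}))) ≃ₜ
      OrdIcc (ω ^ ((k + 1 : ℕ) : Ordinal.{u}))) := by
  rw [Nat.cast_succ, Ordinal.opow_add, Ordinal.opow_one]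
  exact nonempty_onePoint_prod_ordIcc_homeomorph (Ordinal.opow_pos _ Ordinal.omega0_pos)

theorem exists_derivedSet_iterate_univ_ordIcc_omega0_pow_eq_singleton (k : ℕ) :
    ∃ p, derivedSet^[k] (Set.univ : Set (OrdIcc (ω ^ (k : Ordinal.{u})))) = {p} := by
  induction k with
  | zero => exact ⟨default, Set.univ_unique⟩
  | succ k ih =>
    obtain ⟨p, hp⟩ := ih
    obtain ⟨e⟩ := nonempty_onePoint_prod_ordIcc_omega0_pow_homeomorph.{u} k
    exact ⟨_, derivedSet_iterate_univ_eq_singleton_apply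
      (derivedSet_iterate_univ_onePoint_prod hp) e⟩

theorem smallIndexProperty_ordIcc_omega0_pow (k : ℕ) :
    SmallIndexProperty (OrdIcc (ω ^ (k : Ordinal.{u}))) := by
  induction k with
  | zero => exact .of_subsingleton
  | succ k ih =>
    obtain ⟨p, hp⟩ := exists_derivedSet_iterate_univ_ordIcc_omega0_pow_eq_singleton.{u} k
    obtain ⟨e⟩ := nonempty_onePoint_prod_ordIcc_omega0_pow_homeomorph.{u} k
    exact (ih.onePoint_prod (apply_eq_of_derivedSet_iterate_univ_eq_singleton
      (derivedSet_iterate_univ_onePoint_prod hp))).congr e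

end Ordinal

/-- For positive natural numbers `α` and `a`, the group `G` of homeomorphisms
of `X = [1, ω^α·a]` (order topology) has the small index property: every subgroup `H` of `G`
of index `< 2^ℵ₀` contains the pointwise stabilizer of a finite set of clopen subsets of `X`. -/
theorem smallIndexProperty_homeoGroup_omega_pow_mul (α a : ℕ) (hα : 0 < α) (ha : 0 < a)
    (H : Subgroup (OrdIcc (omega0 ^ (α : Ordinal) * (a : Ordinal)) ≃ₜ
      OrdIcc (omega0 ^ (α : Ordinal) * (a : Ordinal))))
    (hH : Cardinal.mk ((OrdIcc (omega0 ^ (α : Ordinal) * (a : Ordinal)) ≃ₜ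
      OrdIcc (omega0 ^ (α : Ordinal) * (a : Ordinal))) ⧸ H) < 2 ^ Cardinal.aleph0) :
    ∃ A : Finset (Set (OrdIcc (omega0 ^ (α : Ordinal) * (a : Ordinal)))),
      (∀ B ∈ A, IsClopen B) ∧
      ∀ g : OrdIcc (omega0 ^ (α : Ordinal) * (a : Ordinal)) ≃ₜ
          OrdIcc (omega0 ^ (α : Ordinal) * (a : Ordinal)),
        (∀ B ∈ A, ⇑g '' B = B) → g ∈ H := by
  obtain ⟨e⟩ := nonempty_fin_prod_ordIcc_homeomorph (ω ^ (α : Ordinal)) a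
  exact ((smallIndexProperty_ordIcc_omega0_pow α).prod_of_finite.congr e) H hH
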